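/- Let r>0 and let α_0>0, β_0>0, γ_0>0 be such that β_0 = -c_m·α_0 - c_m^2 for some integer m≥1, where c_m = -(π/r)^2·((2m-1)/4)^2. Then for every ε>0 there exist positive reals α, β, γ with |α-α_0| < ε, |β-β_0| < ε, |γ-γ_0| < ε and a four times continuously differentiable function x on [-r,r], not identically zero, satisfying the boundary conditions x'(-r) = x'''(-r) = 0, x(r) = x''(r) = 0, the nonlinear equation x'''' + α·x'' + β·x - γ·x^3 - 3·(x'')^3 - 12·x'·x''·x''' - 3·(x')^2·(x'''' - (α/2)·x'') = 0 on [-r,r], and sup_{s∈[-r,r]}|x^{(k)}(s)| < ε for k = 0,1,2,3,4. (Sufficiency part of the main theorem: bifurcation occurs at every parameter point where the linearization has nontrivial kernel.) -/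

import Mathlib

open Real Set

/-!
Write the unknown `x` as a fourfold primitive of `u = x⁗`, with base points alternating between
the two ends of the interval so that the boundary conditions hold automatically. With `Jₙ` denoting
the `n`-fold primitive, the rod equation becomes `u + α J₂ u + β J₄ u = N u` in `C([p, q])`, where
`N` is homogeneous of degree three and the linear operator on the left is a compact perturbation of
the identity.

Since `J₄ = J₂ ∘ J₂`, this operator at a critical pair is `(1 + ω² J₂) (1 + μ J₂)`, where
`cos (ω (q - p)) = 0`. The second factor is injective for all but countably many `μ`, so an
arbitrarily small change of the parameters makes the kernel the line spanned by
`φ = cos (ω (s - p))`. Lagrange's identity (pair `v + ω² J₂ v = φ` with `φ` and integrate by parts)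
shows that `φ` is not in the range of `1 + ω² J₂`. Hence `J₄ φ`, a multiple of `φ`, is not in the
range of the linear operator and spans a complement of it by the Fredholm alternative. This is the
transversality condition for bifurcation from a simple eigenvalue with `β` as the parameter.
-/

open Filter Topology Function MeasureTheory
open scoped NNReal

section Bordering

variable {𝕜 E F : Type*} [RCLike 𝕜] [NormedAddCommGroup E] [NormedSpace 𝕜 E]
  [NormedAddCommGroup F] [NormedSpace 𝕜 F] {L : E →L[𝕜] F} {φ : E} {ψ : F} {l : E →L[𝕜] 𝕜}

theorem eq_zero_of_apply_add_smul_eq_zero (hψ : ψ ∉ L.range) {v : E} {t : 𝕜}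
    (h : L v + t • ψ = 0) : t = 0 := by
  by_contra ht
  refine hψ ⟨-(t⁻¹ • v), ?_⟩
  rw [ContinuousLinearMap.coe_coe, map_neg, map_smul, eq_neg_of_add_eq_zero_left h, smul_neg,
    neg_neg, inv_smul_smul₀ ht]

theorem eq_zero_of_apply_eq_zero_of_map_eq_zero (hker : L.ker = 𝕜 ∙ φ) (hl : l φ ≠ 0) {v : E}
    (hLv : L v = 0) (hlv : l v = 0) : v = 0 := by
  obtain ⟨a, rfl⟩ := Submodule.mem_span_singleton.1 (hker ▸ LinearMap.mem_ker.2 hLv)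
  rw [map_smul, smul_eq_mul] at hlv
  rw [(mul_eq_zero.1 hlv).resolve_right hl, zero_smul]

/-- The operator `(v, t) ↦ (L v + t ψ, l v)`, that is, `L` bordered by the column `ψ` and the row
`l`. In a bifurcation problem it is the derivative of the normalized equation with respect to the
state and the bifurcation parameter. -/
def borderedMap (L : E →L[𝕜] F) (ψ : F) (l : E →L[𝕜] 𝕜) : E × 𝕜 →L[𝕜] F × 𝕜 :=
  (L.coprod (.toSpanSingleton 𝕜 ψ)).prod (l ∘L .fst 𝕜 E 𝕜)

theorem borderedMap_apply (z : E × 𝕜) : borderedMap L ψ l z = (L z.1 + z.2 • ψ, l z.1) := rfl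

theorem injective_borderedMap (hker : L.ker = 𝕜 ∙ φ) (hl : l φ ≠ 0) (hψ : ψ ∉ L.range) :
    Injective (borderedMap L ψ l) := by
  refine (injective_iff_map_eq_zero _).2 fun ⟨v, t⟩ hz ↦ ?_
  obtain ⟨hsum, hlv⟩ := Prod.mk_eq_zero.1 hz
  obtain rfl : t = 0 := eq_zero_of_apply_add_smul_eq_zero hψ hsum
  have hLv : L v = 0 := by simpa using hsum
  exact Prod.mk_eq_zero.2 ⟨eq_zero_of_apply_eq_zero_of_map_eq_zero hker hl hLv hlv, rfl⟩

theorem surjective_borderedMap (hLφ : L φ = 0) (hl : l φ ≠ 0) (hrange : L.range ⊔ 𝕜 ∙ ψ = ⊤) :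
    Surjective (borderedMap L ψ l) := by
  rintro ⟨f, c⟩
  obtain ⟨_, ⟨v, rfl⟩, _, hw, rfl⟩ := Submodule.mem_sup.1 (hrange ▸ Submodule.mem_top (x := f))
  obtain ⟨t, rfl⟩ := Submodule.mem_span_singleton.1 hw
  refine ⟨(v + ((c - l v) / l φ) • φ, t), ?_⟩
  simp [borderedMap_apply, hLφ, div_mul_cancel₀ _ hl]

end Bordering

section FredholmAlternative

variable {𝕜 E : Type*} [RCLike 𝕜] [NormedAddCommGroup E] [NormedSpace 𝕜 E] [CompleteSpace E]
  {K : E →L[𝕜] E}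

theorem surjective_one_add_of_isCompactOperator (hK : IsCompactOperator K)
    (hinj : Injective ⇑(1 + K)) : Surjective ⇑(1 + K) := by
  have not_eigenvalue : ¬ Module.End.HasEigenvalue (K : Module.End 𝕜 E) (-1) := fun hev ↦ by
    obtain ⟨v, hv⟩ := hev.exists_hasEigenvector
    have hKv : K v = -v := by simpa using hv.apply_eq_smul
    exact hv.2 (hinj (by simp [hKv]))
  have hunit := (hK.hasEigenvalue_or_mem_resolventSet (neg_ne_zero.2 one_ne_zero)).resolve_left
    not_eigenvalue
  rw [spectrum.mem_resolventSet_iff, ← IsUnit.neg_iff, map_neg, map_one, neg_sub, sub_neg_eq_add,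
    add_comm, ContinuousLinearMap.isUnit_iff_bijective] at hunit
  exact hunit.2

-- With `l φ = 1`, the compact perturbation `1 + K + l(·) ψ` is injective, hence surjective.
theorem range_one_add_sup_span_eq_top {φ ψ : E} (hK : IsCompactOperator K)
    (hker : (1 + K).ker = 𝕜 ∙ φ) (hφ : φ ≠ 0) (hψ : ψ ∉ (1 + K).range) :
    (1 + K).range ⊔ 𝕜 ∙ ψ = ⊤ := by
  obtain ⟨l, hl⟩ := SeparatingDual.exists_eq_one (R := 𝕜) hφ
  let R : E →L[𝕜] E := ContinuousLinearMap.toSpanSingleton 𝕜 ψ ∘L l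
  have hR (v : E) : (1 + (K + R)) v = (1 + K) v + l v • ψ := by simp [R, add_assoc]
  have hcompact : IsCompactOperator ⇑(K + R) := hK.add <|
    (isCompactOperator_of_locallyCompactSpace_rng (.toSpanSingleton 𝕜 ψ)).comp_clm l
  have hinj : Injective ⇑(1 + (K + R)) := by
    refine (injective_iff_map_eq_zero _).2 fun v hv ↦ ?_
    rw [hR] at hv
    have hlv : l v = 0 := eq_zero_of_apply_add_smul_eq_zero hψ hv
    refine eq_zero_of_apply_eq_zero_of_map_eq_zero hker (hl ▸ one_ne_zero) ?_ hlv
    simpa only [hlv, zero_smul, add_zero] using hv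
  refine eq_top_iff.2 fun f _ ↦ ?_
  obtain ⟨v, rfl⟩ := surjective_one_add_of_isCompactOperator hcompact hinj f
  rw [hR]
  exact Submodule.add_mem_sup ⟨v, rfl⟩ (Submodule.mem_span_singleton.2 ⟨l v, rfl⟩)

end FredholmAlternative

section CrandallRabinowitz

theorem exists_tendsto_of_bijective_fderiv {𝕜 P X Y : Type*} [RCLike 𝕜]
    [NormedAddCommGroup P] [NormedSpace 𝕜 P] [CompleteSpace P]
    [NormedAddCommGroup X] [NormedSpace 𝕜 X] [CompleteSpace X]
    [NormedAddCommGroup Y] [NormedSpace 𝕜 Y] [CompleteSpace Y]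
    {G : P × X → Y} {a₀ : P} {w₀ : X} {D : X →L[𝕜] Y} (hG : ContDiffAt 𝕜 1 G (a₀, w₀))
    (hD : HasFDerivAt (fun w ↦ G (a₀, w)) D w₀) (hbij : Bijective D) :
    ∃ g : P → X, Tendsto g (𝓝 a₀) (𝓝 w₀) ∧ ∀ᶠ a in 𝓝 a₀, G (a, g a) = G (a₀, w₀) := by
  have hstrict := hG.hasStrictFDerivAt one_ne_zero
  have hDeq : fderiv 𝕜 G (a₀, w₀) ∘L .inr 𝕜 P X = D :=
    (hstrict.hasFDerivAt.comp w₀ (hasFDerivAt_prodMk_right a₀ w₀)).unique hD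
  have hinv : (fderiv 𝕜 G (a₀, w₀) ∘L .inr 𝕜 P X).IsInvertible := hDeq ▸
    ⟨.ofBijective D (LinearMap.ker_eq_bot.2 hbij.1) (LinearMap.range_eq_top.2 hbij.2),
      ContinuousLinearEquiv.coe_ofBijective D _ _⟩
  exact ⟨_, hstrict.tendsto_implicitFunctionOfProdDomain hinv,
    hstrict.eventually_apply_implicitFunctionOfProdDomain hinv⟩

variable {𝕜 E F : Type*} [RCLike 𝕜] [NormedAddCommGroup E] [NormedSpace 𝕜 E] [CompleteSpace E]
  [NormedAddCommGroup F] [NormedSpace 𝕜 F] [CompleteSpace F]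

-- Substituting `a • u` for the unknown and dividing by `a` leaves a smooth equation at `a = 0`.
theorem crandallRabinowitz_of_homogeneous {L B : E →L[𝕜] F} {N : E → F} {φ : E} {k : ℕ}
    (hk : k ≠ 0) (hN : ContDiff 𝕜 1 N) (hhom : ∀ (a : 𝕜) u, N (a • u) = a ^ (k + 1) • N u)
    (hφ : φ ≠ 0) (hker : L.ker = 𝕜 ∙ φ) (hBφ : B φ ∉ L.range) (hrange : L.range ⊔ 𝕜 ∙ B φ = ⊤) :
    ∃ᶠ z : E × 𝕜 in 𝓝 0, z.1 ≠ 0 ∧ L z.1 + z.2 • B z.1 = N z.1 := by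
  obtain ⟨l, hl⟩ := SeparatingDual.exists_ne_zero (R := 𝕜) hφ
  have hLφ : L φ = 0 := LinearMap.mem_ker.1 (hker ▸ Submodule.mem_span_singleton_self φ)
  let G : 𝕜 × (E × 𝕜) → F × 𝕜 := fun y ↦
    (L y.2.1 + y.2.2 • B y.2.1 - y.1 ^ k • N y.2.1, l y.2.1)
  have hG : ContDiff 𝕜 1 G := by fun_prop
  have hD : HasFDerivAt (fun w ↦ G (0, w)) (borderedMap L (B φ) l) (φ, 0) := by
    have hfst : HasFDerivAt Prod.fst (.fst 𝕜 E 𝕜) (φ, (0 : 𝕜)) := hasFDerivAt_fst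
    have hBfst := B.hasFDerivAt.comp (φ, (0 : 𝕜)) hfst
    refine (((L.hasFDerivAt.comp _ hfst).add (hasFDerivAt_snd.smul hBfst)).prodMk
      (l.hasFDerivAt.comp _ hfst)).congr_fderiv ?_ |>.congr_of_eventuallyEq ?_
    · ext <;> simp [borderedMap_apply]
    · exact .of_forall fun w ↦ by simp [G, hk]
  obtain ⟨g, hg, hGg⟩ := exists_tendsto_of_bijective_fderiv hG.contDiffAt hD
    ⟨injective_borderedMap hker hl hBφ, surjective_borderedMap hLφ hl hrange⟩
  have hbranch : Tendsto (fun a ↦ (a • (g a).1, (g a).2)) (𝓝[≠] 0) (𝓝 (0 : E × 𝕜)) := by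
    have := (tendsto_id.smul hg.fst_nhds).prodMk_nhds hg.snd_nhds
    simp only [id, zero_smul] at this
    exact this.mono_left nhdsWithin_le_nhds
  refine hbranch.frequently (Eventually.frequently ?_)
  filter_upwards [hGg.filter_mono nhdsWithin_le_nhds, self_mem_nhdsWithin] with a ha ha0
  obtain ⟨heq, hnorm⟩ := Prod.mk.inj ha
  refine ⟨smul_ne_zero ha0 fun h0 ↦ hl ?_, ?_⟩
  · rw [← hnorm, h0, map_zero]
  · have : L (g a).1 + (g a).2 • B (g a).1 = a ^ k • N (g a).1 := by
      simpa [hk, hLφ, sub_eq_zero] using heq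
    rw [map_smul, map_smul, smul_comm, ← smul_add, this, smul_smul, hhom, pow_succ']

end CrandallRabinowitz

theorem isCompact_setOf_lipschitzWith {X Y : Type*} [PseudoMetricSpace X] [CompactSpace X]
    [PseudoMetricSpace Y] (K : ℝ≥0) {s : Set Y} (hs : IsCompact s) :
    IsCompact {f : C(X, Y) | LipschitzWith K f ∧ ∀ x, f x ∈ s} := by
  refine ArzelaAscoli.isCompact_of_equicontinuous _ ?_
    (LipschitzWith.uniformEquicontinuous _ K fun f ↦ f.2.1).equicontinuous
  have himage : ContinuousMap.toFun '' {f : C(X, Y) | LipschitzWith K f ∧ ∀ x, f x ∈ s} =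
      {g | LipschitzWith K g} ∩ univ.pi fun _ ↦ s := by
    ext g
    refine ⟨?_, fun hg ↦ ⟨⟨g, hg.1.continuous⟩, ⟨hg.1, fun x ↦ hg.2 x trivial⟩, rfl⟩⟩
    rintro ⟨f, hf, rfl⟩
    exact ⟨hf.1, fun x _ ↦ hf.2 x⟩
  rw [himage]
  exact (isCompact_univ_pi fun _ ↦ hs).inter_left (isClosed_setOfPred_lipschitzWith K)

section Primitive

variable {F : Type*} [NormedAddCommGroup F] [NormedSpace ℝ F]

/-- The iterated primitives of `f`, the `(n + 1)`-st one vanishing at `c n`. -/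
noncomputable def iteratedIntegral (c : ℕ → ℝ) (f : ℝ → F) : ℕ → ℝ → F
  | 0 => f
  | n + 1 => fun s ↦ ∫ t in c n..s, iteratedIntegral c f n t

section IteratedIntegral

variable {c : ℕ → ℝ} {f : ℝ → F}

theorem iteratedIntegral_succ_self (n : ℕ) : iteratedIntegral c f (n + 1) (c n) = 0 :=
  intervalIntegral.integral_same

theorem continuous_iteratedIntegral (hf : Continuous f) (n : ℕ) :
    Continuous (iteratedIntegral c f n) := by
  induction n with
  | zero => exact hf
  | succ n ih =>
    exact intervalIntegral.continuous_primitive (fun a b ↦ ih.intervalIntegrable a b) (c n)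

variable [CompleteSpace F]

theorem hasDerivAt_iteratedIntegral (hf : Continuous f) (n : ℕ) (s : ℝ) :
    HasDerivAt (iteratedIntegral c f (n + 1)) (iteratedIntegral c f n s) s :=
  ((continuous_iteratedIntegral hf n).integral_hasStrictDerivAt (c n) s).hasDerivAt

theorem contDiff_iteratedIntegral (hf : Continuous f) (n : ℕ) :
    ContDiff ℝ n (iteratedIntegral c f n) := by
  induction n with
  | zero => exact contDiff_zero.2 hf
  | succ n ih =>
    have hderiv := hasDerivAt_iteratedIntegral (c := c) hf n
    rw [Nat.cast_succ, contDiff_succ_iff_deriv, funext fun s ↦ (hderiv s).deriv]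
    exact ⟨fun s ↦ (hderiv s).differentiableAt, by simp, ih⟩

theorem iteratedDeriv_iteratedIntegral (hf : Continuous f) (n k : ℕ) :
    iteratedDeriv k (iteratedIntegral c f (n + k)) = iteratedIntegral c f n := by
  induction k with
  | zero => exact iteratedDeriv_zero
  | succ k ih =>
    rw [iteratedDeriv_succ', ← ih]
    congr 1
    exact funext fun s ↦ (hasDerivAt_iteratedIntegral hf (n + k) s).deriv

end IteratedIntegral

variable {p q : ℝ}

theorem norm_integral_IccExtend_le (h : p ≤ q) (u : C(Icc p q, F)) (a b : ℝ) :
    ‖∫ t in a..b, u.IccExtend h t‖ ≤ ‖u‖ * |b - a| :=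
  intervalIntegral.norm_integral_le_of_norm_le_const fun _ _ ↦ u.norm_coe_le_norm _

/-- The operator on `C([p, q])` sending a function to its primitive that vanishes at `c`. -/
noncomputable def primitive (h : p ≤ q) (c : Icc p q) : C(Icc p q, F) →L[ℝ] C(Icc p q, F) :=
  LinearMap.mkContinuous
    { toFun u :=
        { toFun s := ∫ t in c..s, u.IccExtend h t
          continuous_toFun := (intervalIntegral.continuous_primitive
            (fun a b ↦ (u.IccExtend h).continuous.intervalIntegrable a b) c).comp
              continuous_subtype_val }
      map_add' u v := by
        ext s
        exact intervalIntegral.integral_add ((u.IccExtend h).continuous.intervalIntegrable _ _)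
          ((v.IccExtend h).continuous.intervalIntegrable _ _)
      map_smul' a u := by
        ext s
        exact intervalIntegral.integral_smul a _ }
    (q - p) fun u ↦ (ContinuousMap.norm_le _ (mul_nonneg (sub_nonneg.2 h) (norm_nonneg u))).2
      fun s ↦ (norm_integral_IccExtend_le h u c s).trans <| by
        rw [mul_comm]
        exact mul_le_mul_of_nonneg_right (dist_le_of_mem_Icc s.2 c.2) (norm_nonneg u)

theorem primitive_apply (h : p ≤ q) (c : Icc p q) (u : C(Icc p q, F)) (s : Icc p q) :
    primitive h c u s = ∫ t in c..s, u.IccExtend h t := rfl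

theorem primitive_self (h : p ≤ q) (c : Icc p q) (u : C(Icc p q, F)) : primitive h c u c = 0 :=
  intervalIntegral.integral_same

theorem norm_primitive_sub_le (h : p ≤ q) (c : Icc p q) (u : C(Icc p q, F)) (s t : Icc p q) :
    ‖primitive h c u s - primitive h c u t‖ ≤ ‖u‖ * dist s t := by
  have hinterval (a b : ℝ) := (u.IccExtend h).continuous.intervalIntegrable (μ := volume) a b
  rw [primitive_apply, primitive_apply,
    intervalIntegral.integral_interval_sub_left (hinterval _ _) (hinterval _ _)]
  exact norm_integral_IccExtend_le h u t s

theorem isCompactOperator_primitive [ProperSpace F] (h : p ≤ q) (c : Icc p q) :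
    IsCompactOperator (primitive (F := F) h c) := by
  refine (isCompactOperator_iff_exists_mem_nhds_image_subset_compact _).2
    ⟨_, Metric.closedBall_mem_nhds 0 one_pos, _, isCompact_setOf_lipschitzWith 1
      (isCompact_closedBall (0 : F) (q - p)), ?_⟩
  rintro _ ⟨u, hu, rfl⟩
  rw [mem_closedBall_zero_iff] at hu
  have hlip (s t : Icc p q) : ‖primitive h c u s - primitive h c u t‖ ≤ dist s t :=
    (norm_primitive_sub_le h c u s t).trans (mul_le_of_le_one_left dist_nonneg hu)
  refine ⟨.of_dist_le_mul fun s t ↦ ?_, fun s ↦ mem_closedBall_zero_iff.2 ?_⟩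
  · simpa [dist_eq_norm] using hlip s t
  · simpa [primitive_self] using (hlip s c).trans (dist_le_of_mem_Icc s.2 c.2)

theorem primitive_apply_eq_sub [CompleteSpace F] (h : p ≤ q) (c : Icc p q) {u : C(Icc p q, F)}
    {g : ℝ → F} (hg : ∀ s : Icc p q, HasDerivAt g (u s) s) (s : Icc p q) :
    primitive h c u s = g s - g c := by
  refine intervalIntegral.integral_eq_sub_of_hasDerivAt (fun t ht ↦ ?_)
    ((u.IccExtend h).continuous.intervalIntegrable _ _)
  have ht : t ∈ Icc p q := uIcc_subset_Icc c.2 s.2 ht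
  exact (hg ⟨t, ht⟩).congr_deriv (IccExtend_of_mem h u ht).symm

theorem injective_primitive [CompleteSpace F] (h : p < q) (c : Icc p q) :
    Injective (primitive (F := F) h.le c) := by
  refine (injective_iff_map_eq_zero _).2 fun u hu ↦ ContinuousMap.ext fun s ↦ ?_
  have hderiv : HasDerivWithinAt (fun s ↦ ∫ t in c..s, u.IccExtend h.le t) (u s) (Icc p q) s :=
    (((u.IccExtend h.le).continuous.integral_hasStrictDerivAt c s).hasDerivAt.congr_deriv
      (IccExtend_val h.le u s)).hasDerivWithinAt
  have hzero : HasDerivWithinAt (fun s ↦ ∫ t in c..s, u.IccExtend h.le t) 0 (Icc p q) s :=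
    (hasDerivWithinAt_const (s : ℝ) (Icc p q) (0 : F)).congr_of_mem
      (fun t ht ↦ DFunLike.congr_fun hu ⟨t, ht⟩) s.2
  exact (uniqueDiffOn_Icc h s s.2).eq_deriv _ hderiv hzero

/-- The iterated primitives on `C([p, q])`, the `(n + 1)`-st one vanishing at `c n`. -/
noncomputable def iteratedPrimitive (h : p ≤ q) (c : ℕ → Icc p q) :
    ℕ → C(Icc p q, F) →L[ℝ] C(Icc p q, F)
  | 0 => 1
  | n + 1 => primitive h (c n) ∘L iteratedPrimitive h c n

theorem iteratedPrimitive_add (h : p ≤ q) (c : ℕ → Icc p q) (m n : ℕ) :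
    iteratedPrimitive (F := F) h c (m + n) =
      iteratedPrimitive h (fun i ↦ c (i + n)) m ∘L iteratedPrimitive h c n := by
  induction m with
  | zero => rw [Nat.zero_add]; rfl
  | succ m ih =>
    rw [Nat.succ_add, iteratedPrimitive, iteratedPrimitive, ih, ContinuousLinearMap.comp_assoc]

theorem iteratedPrimitive_apply (h : p ≤ q) (c : ℕ → Icc p q) (n : ℕ) (u : C(Icc p q, F))
    (s : Icc p q) : iteratedPrimitive h c n u s =
      iteratedIntegral (fun i ↦ c i) (u.IccExtend h) n s := by
  induction n generalizing s with
  | zero => exact (IccExtend_val h u s).symm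
  | succ n ih =>
    refine intervalIntegral.integral_congr fun t ht ↦ ?_
    have ht : t ∈ Icc p q := uIcc_subset_Icc (c n).2 s.2 ht
    exact (IccExtend_of_mem h _ ht).trans (ih ⟨t, ht⟩)

theorem iteratedDeriv_iteratedIntegral_apply [CompleteSpace F] (h : p ≤ q) (c : ℕ → Icc p q)
    (n k : ℕ) (u : C(Icc p q, F)) (s : Icc p q) :
    iteratedDeriv k (iteratedIntegral (fun i ↦ c i) (u.IccExtend h) (n + k)) s =
      iteratedPrimitive h c n u s := by
  rw [iteratedDeriv_iteratedIntegral (u.IccExtend h).continuous, iteratedPrimitive_apply]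

theorem injective_iteratedPrimitive [CompleteSpace F] (h : p < q) (c : ℕ → Icc p q) (n : ℕ) :
    Injective (iteratedPrimitive (F := F) h.le c n) := by
  induction n with
  | zero => exact injective_id
  | succ n ih => exact (injective_primitive h (c n)).comp ih

theorem isCompactOperator_iteratedPrimitive_succ [ProperSpace F] (h : p ≤ q) (c : ℕ → Icc p q)
    (n : ℕ) : IsCompactOperator (iteratedPrimitive (F := F) h c (n + 1)) :=
  IsCompactOperator.comp_clm (f := primitive h (c n)) (isCompactOperator_primitive h (c n))
    (iteratedPrimitive h c n)

end Primitive

section MixedPrimitive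

variable {p q ω μ : ℝ} {h : p ≤ q} {v : C(Icc p q, ℝ)}

/-- The end of `[p, q]` at which the `(n + 1)`-st mixed primitive vanishes. -/
def mixedBasepoint (h : p ≤ q) (n : ℕ) : Icc p q :=
  if Even n then ⟨p, left_mem_Icc.2 h⟩ else ⟨q, right_mem_Icc.2 h⟩

/-- The `n`-fold primitive on `[p, q]` with the boundary conditions `x′ = 0` at `p` and `x = 0` at
`q`, repeated every two orders: `mixedPrimitive h 2` inverts the second derivative and
`mixedPrimitive h 4` the fourth one. -/
noncomputable def mixedPrimitive (h : p ≤ q) (n : ℕ) : C(Icc p q, ℝ) →L[ℝ] C(Icc p q, ℝ) :=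
  iteratedPrimitive h (mixedBasepoint h) n

theorem mixedPrimitive_four : mixedPrimitive h 4 = mixedPrimitive h 2 ∘L mixedPrimitive h 2 := by
  have hperiodic (i : ℕ) : mixedBasepoint h (i + 2) = mixedBasepoint h i := by
    simp [mixedBasepoint, Nat.even_add]
  simpa only [hperiodic] using! iteratedPrimitive_add h (mixedBasepoint h) 2 2

theorem mixedPrimitive_two_right (v : C(Icc p q, ℝ)) :
    mixedPrimitive h 2 v ⟨q, right_mem_Icc.2 h⟩ = 0 :=
  primitive_self h _ _

theorem exists_hasDerivAt_mixedPrimitive_two (h : p ≤ q) (v : C(Icc p q, ℝ)) :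
    ∃ W P : ℝ → ℝ, (∀ s : Icc p q, W s = mixedPrimitive h 2 v s) ∧ P p = 0 ∧
      (∀ s, HasDerivAt W (P s) s) ∧ ∀ s : Icc p q, HasDerivAt P (v s) s := by
  refine ⟨iteratedIntegral (fun i ↦ mixedBasepoint h i) (v.IccExtend h) 2,
    iteratedIntegral (fun i ↦ mixedBasepoint h i) (v.IccExtend h) 1,
    fun s ↦ (iteratedPrimitive_apply h _ 2 v s).symm, iteratedIntegral_succ_self 0,
    hasDerivAt_iteratedIntegral (v.IccExtend h).continuous 1, fun s ↦ ?_⟩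
  exact (hasDerivAt_iteratedIntegral (v.IccExtend h).continuous 0 s).congr_deriv
    (IccExtend_val h v s)

theorem eq_of_hasDerivAt_zero {F : Type*} [NormedAddCommGroup F] [NormedSpace ℝ F] {g : ℝ → F}
    (hg : ∀ s ∈ Icc p q, HasDerivAt g 0 s) {s : ℝ}
    (hs : s ∈ Icc p q) : g s = g p :=
  constant_of_has_deriv_right_zero (fun t ht ↦ (hg t ht).continuousAt.continuousWithinAt)
    (fun t ht ↦ (hg t (Ico_subset_Icc_self ht)).hasDerivWithinAt) s hs

-- A complex frequency covers the oscillating and the hyperbolic solutions at once.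
theorem mul_eq_mul_cos_of_hasDerivAt {W P : ℝ → ℂ} {ν : ℂ} (hp : P p = 0)
    (hW : ∀ s ∈ Icc p q, HasDerivAt W (P s) s)
    (hP : ∀ s ∈ Icc p q, HasDerivAt P (-(ν ^ 2 * W s)) s) {s : ℝ} (hs : s ∈ Icc p q) :
    ν * W s = ν * W p * Complex.cos (ν * (s - p)) := by
  have hθ (s : ℝ) : HasDerivAt (fun s : ℝ ↦ ν * (s - p)) ν s := by
    simpa using ((hasDerivAt_id s).ofReal_comp.sub_const (p : ℂ)).const_mul ν
  have hcos (s : ℝ) := (Complex.hasDerivAt_cos _).comp s (hθ s)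
  have hsin (s : ℝ) := (Complex.hasDerivAt_sin _).comp s (hθ s)
  have hA : ν * W s * Complex.cos (ν * (s - p)) - P s * Complex.sin (ν * (s - p)) = ν * W p := by
    have := eq_of_hasDerivAt_zero (fun s hs ↦ ((((hW s hs).const_mul ν).mul (hcos s)).sub
      ((hP s hs).mul (hsin s))).congr_deriv (by simp only [comp_apply]; ring)) hs
    simpa [hp] using this
  have hB : P s * Complex.cos (ν * (s - p)) + ν * W s * Complex.sin (ν * (s - p)) = 0 := by
    have := eq_of_hasDerivAt_zero (fun s hs ↦ (((hP s hs).mul (hcos s)).add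
      (((hW s hs).const_mul ν).mul (hsin s))).congr_deriv (by simp only [comp_apply]; ring)) hs
    simpa [hp] using this
  linear_combination Complex.cos (ν * (s - p)) * hA + Complex.sin (ν * (s - p)) * hB -
    ν * W s * Complex.sin_sq_add_cos_sq (ν * (s - p))

theorem apply_eq_mul_cos_of_add_smul_mixedPrimitive_eq_zero {ν : ℂ} (hν : ν ^ 2 = μ)
    (hv : v + μ • mixedPrimitive h 2 v = 0) (s : Icc p q) :
    (v s : ℂ) = v ⟨p, left_mem_Icc.2 h⟩ * Complex.cos (ν * (s - p)) := by
  obtain ⟨W, P, hW, hPp, hW', hP'⟩ := exists_hasDerivAt_mixedPrimitive_two h v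
  have hvW (s : Icc p q) : v s = -(μ * W s) := by
    rw [hW]
    exact eq_neg_of_add_eq_zero_left (DFunLike.congr_fun hv s)
  have hsol := mul_eq_mul_cos_of_hasDerivAt (ν := ν) (W := fun s ↦ W s) (P := fun s ↦ P s)
    (by simp [hPp]) (fun s _ ↦ (hW' s).ofReal_comp)
    (fun s hs ↦ (hP' ⟨s, hs⟩).ofReal_comp.congr_deriv (by simp [hvW, hν])) s.2
  rw [hvW, hvW]
  push_cast
  rw [← hν]
  linear_combination -ν * hsol

theorem eq_zero_or_exists_mul_sq_eq (hv : v + μ • mixedPrimitive h 2 v = 0) :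
    v = 0 ∨ ∃ k : ℤ, μ * (q - p) ^ 2 = ((2 * k + 1) * π / 2) ^ 2 := by
  obtain ⟨ν, hν⟩ := IsAlgClosed.exists_pow_nat_eq (μ : ℂ) two_pos
  have hsol := apply_eq_mul_cos_of_add_smul_mixedPrimitive_eq_zero hν hv
  have hright : v ⟨q, right_mem_Icc.2 h⟩ = 0 := by
    simpa [mixedPrimitive_two_right] using DFunLike.congr_fun hv ⟨q, right_mem_Icc.2 h⟩
  have hprod := hsol ⟨q, right_mem_Icc.2 h⟩
  rw [hright, Complex.ofReal_zero, zero_eq_mul, Complex.ofReal_eq_zero] at hprod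
  refine hprod.imp (fun hp ↦ ContinuousMap.ext fun s ↦ ?_) fun hcos ↦ ?_
  · simpa [hp] using hsol s
  · obtain ⟨k, hk⟩ := Complex.cos_eq_zero_iff.1 hcos
    refine ⟨k, ?_⟩
    have : (μ : ℂ) * (q - p) ^ 2 = ((2 * k + 1) * π / 2) ^ 2 := by rw [← hν, ← mul_pow, hk]
    exact_mod_cast this

theorem frequently_injective_one_add_smul_mixedPrimitive (h : p < q) (μ₀ : ℝ) :
    ∃ᶠ μ in 𝓝 μ₀, ∀ v, v + μ • mixedPrimitive h.le 2 v = 0 → v = 0 := by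
  let resonances : Set ℝ := range fun k : ℤ ↦ ((2 * k + 1) * π / 2) ^ 2 / (q - p) ^ 2
  have hdense : Dense resonancesᶜ := (countable_range _).dense_compl ℝ
  refine (mem_closure_iff_frequently.1 (hdense μ₀)).mono fun μ hμ v hv ↦ ?_
  refine (eq_zero_or_exists_mul_sq_eq hv).resolve_right fun ⟨k, hk⟩ ↦ hμ ⟨k, ?_⟩
  exact (eq_div_of_mul_eq (pow_ne_zero 2 (sub_pos.2 h).ne') hk).symm

/-- The eigenfunction `s ↦ cos (ω (s - p))` of the second derivative on `[p, q]`. -/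
noncomputable def cosineMode (p q ω : ℝ) : C(Icc p q, ℝ) where
  toFun s := cos (ω * (s - p))

theorem cosineMode_apply (s : Icc p q) : cosineMode p q ω s = cos (ω * (s - p)) := rfl

theorem cosineMode_left (h : p ≤ q) : cosineMode p q ω ⟨p, left_mem_Icc.2 h⟩ = 1 := by
  simp [cosineMode_apply]

theorem cosineMode_ne_zero (h : p ≤ q) : cosineMode p q ω ≠ 0 := fun h0 ↦ by
  simpa [h0] using cosineMode_left (ω := ω) h

theorem lt_of_cos_mul_sub_eq_zero (h : p ≤ q) (hω : cos (ω * (q - p)) = 0) : p < q :=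
  h.lt_of_ne fun hpq ↦ by simp [hpq] at hω

theorem hasDerivAt_cos_mul_sub (ω p s : ℝ) :
    HasDerivAt (fun s ↦ cos (ω * (s - p))) (-(ω * sin (ω * (s - p)))) s := by
  simpa [mul_comm] using (((hasDerivAt_id s).sub_const p).const_mul ω).cos

theorem hasDerivAt_sin_mul_sub (ω p s : ℝ) :
    HasDerivAt (fun s ↦ sin (ω * (s - p))) (ω * cos (ω * (s - p))) s := by
  simpa [mul_comm] using (((hasDerivAt_id s).sub_const p).const_mul ω).sin

theorem cosineMode_add_smul_mixedPrimitive (h : p ≤ q) (hω : cos (ω * (q - p)) = 0) :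
    cosineMode p q ω + ω ^ 2 • mixedPrimitive h 2 (cosineMode p q ω) = 0 := by
  have hω0 : ω ≠ 0 := fun h0 ↦ by simp [h0] at hω
  have hone (s : Icc p q) : mixedPrimitive h 1 (cosineMode p q ω) s = ω⁻¹ * sin (ω * (s - p)) := by
    have hsin (t : Icc p q) := ((hasDerivAt_sin_mul_sub ω p t).const_mul ω⁻¹).congr_deriv
      (inv_mul_cancel_left₀ hω0 (cosineMode p q ω t))
    exact (primitive_apply_eq_sub h _ hsin s).trans (by simp [mixedBasepoint])
  have htwo (s : Icc p q) :
      mixedPrimitive h 2 (cosineMode p q ω) s = -(ω⁻¹ ^ 2 * cos (ω * (s - p))) := by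
    have hcos (t : Icc p q) := ((hasDerivAt_cos_mul_sub ω p t).const_mul (-ω⁻¹ ^ 2)).congr_deriv
      (show _ = mixedPrimitive h 1 (cosineMode p q ω) t by rw [hone]; field_simp)
    exact (primitive_apply_eq_sub h _ hcos s).trans (by simp [mixedBasepoint, hω])
  ext s
  simp [htwo, cosineMode_apply, hω0]

theorem ker_one_add_smul_mixedPrimitive (h : p ≤ q) (hω : cos (ω * (q - p)) = 0) :
    (1 + ω ^ 2 • mixedPrimitive h 2).ker = ℝ ∙ cosineMode p q ω := by
  refine le_antisymm (fun v hv ↦ Submodule.mem_span_singleton.2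
    ⟨v ⟨p, left_mem_Icc.2 h⟩, ContinuousMap.ext fun s ↦ ?_⟩)
    ((Submodule.span_singleton_le_iff_mem _ _).2 (cosineMode_add_smul_mixedPrimitive h hω))
  have hsol :=
    apply_eq_mul_cos_of_add_smul_mixedPrimitive_eq_zero (Complex.ofReal_pow ω 2).symm hv s
  exact_mod_cast hsol.symm

theorem cosineMode_notMem_range (h : p ≤ q) (hω : cos (ω * (q - p)) = 0) :
    cosineMode p q ω ∉ (1 + ω ^ 2 • mixedPrimitive h 2).range := by
  rintro ⟨v, hv⟩
  obtain ⟨W, P, hW, hPp, hW', hP'⟩ := exists_hasDerivAt_mixedPrimitive_two h v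
  have hsource (s : Icc p q) : v s + ω ^ 2 * W s = cos (ω * (s - p)) := by
    rw [hW]
    exact DFunLike.congr_fun hv s
  have hWq : W q = 0 := (hW ⟨q, right_mem_Icc.2 h⟩).trans (mixedPrimitive_two_right v)
  have lagrange (s : ℝ) (hs : s ∈ uIcc p q) :
      HasDerivAt (fun s ↦ P s * cos (ω * (s - p)) + W s * (ω * sin (ω * (s - p))))
        (cos (ω * (s - p)) ^ 2) s := by
    rw [uIcc_of_le h] at hs
    refine (((hP' ⟨s, hs⟩).mul (hasDerivAt_cos_mul_sub ω p s)).add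
      ((hW' s).mul ((hasDerivAt_sin_mul_sub ω p s).const_mul ω))).congr_deriv ?_
    linear_combination cos (ω * (s - p)) * hsource ⟨s, hs⟩
  have hcont : Continuous fun s ↦ cos (ω * (s - p)) ^ 2 := by fun_prop
  have hzero : ∫ s in p..q, cos (ω * (s - p)) ^ 2 = 0 := by
    rw [intervalIntegral.integral_eq_sub_of_hasDerivAt lagrange (hcont.intervalIntegrable p q)]
    simp [hω, hWq, hPp]
  exact (intervalIntegral.integral_pos (lt_of_cos_mul_sub_eq_zero h hω) hcont.continuousOn
    (fun _ _ ↦ sq_nonneg _) ⟨p, left_mem_Icc.2 h, by simp⟩).ne' hzero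

/-- The operator `1 + (μ + ν) J₂ + μ ν J₄`, where `Jₙ` is the `n`-fold mixed primitive. Applied to
`x⁗`, it gives the linearized rod operator `x⁗ + (μ + ν) x″ + μ ν x`. -/
noncomputable def linearizedRod (h : p ≤ q) (μ ν : ℝ) : C(Icc p q, ℝ) →L[ℝ] C(Icc p q, ℝ) :=
  1 + ((μ + ν) • mixedPrimitive h 2 + (μ * ν) • mixedPrimitive h 4)

theorem linearizedRod_apply (h : p ≤ q) (μ ν : ℝ) (v : C(Icc p q, ℝ)) :
    linearizedRod h μ ν v =
      (1 + μ • mixedPrimitive h 2) ((1 + ν • mixedPrimitive h 2) v) := by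
  simp only [linearizedRod, mixedPrimitive_four, add_apply, smul_apply,
    one_apply_eq_self, ContinuousLinearMap.comp_apply, map_add, map_smul]
  module

theorem linearizedRod_comm (h : p ≤ q) (μ ν : ℝ) : linearizedRod h μ ν = linearizedRod h ν μ := by
  rw [linearizedRod, linearizedRod, add_comm μ, mul_comm μ]

theorem ker_linearizedRod (h : p ≤ q) (hω : cos (ω * (q - p)) = 0)
    (hμ : ∀ v, v + μ • mixedPrimitive h 2 v = 0 → v = 0) :
    (linearizedRod h μ (ω ^ 2)).ker = ℝ ∙ cosineMode p q ω := by
  rw [← ker_one_add_smul_mixedPrimitive h hω]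
  ext v
  simp only [LinearMap.mem_ker, ContinuousLinearMap.coe_coe, linearizedRod_apply]
  exact ⟨hμ _, fun hv ↦ by rw [hv, map_zero]⟩

theorem mixedPrimitive_four_cosineMode_notMem_range (h : p ≤ q) (hω : cos (ω * (q - p)) = 0) :
    mixedPrimitive h 4 (cosineMode p q ω) ∉ (linearizedRod h μ (ω ^ 2)).range := by
  rintro ⟨v, hv⟩
  refine cosineMode_notMem_range h hω ⟨(1 + μ • mixedPrimitive h 2) ((ω ^ 2) ^ 2 • v), ?_⟩
  have htwo := eq_neg_of_add_eq_zero_right (cosineMode_add_smul_mixedPrimitive h hω)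
  rw [ContinuousLinearMap.coe_coe] at hv ⊢
  rw [← linearizedRod_apply, linearizedRod_comm, map_smul, hv, mixedPrimitive_four,
    ContinuousLinearMap.comp_apply, sq, mul_smul, ← map_smul _ (ω ^ 2), ← map_smul, htwo, map_smul,
    map_neg, smul_neg, htwo, neg_neg]

theorem range_linearizedRod_sup_span_eq_top (h : p ≤ q) (hω : cos (ω * (q - p)) = 0)
    (hμ : ∀ v, v + μ • mixedPrimitive h 2 v = 0 → v = 0) :
    (linearizedRod h μ (ω ^ 2)).range ⊔ ℝ ∙ mixedPrimitive h 4 (cosineMode p q ω) = ⊤ :=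
  range_one_add_sup_span_eq_top
    (((isCompactOperator_iteratedPrimitive_succ h _ 1).smul _).add
      ((isCompactOperator_iteratedPrimitive_succ h _ 3).smul _))
    (ker_linearizedRod h hω hμ) (cosineMode_ne_zero h)
    (mixedPrimitive_four_cosineMode_notMem_range h hω)

end MixedPrimitive

section Rod

variable {p q α β γ ω μ ε : ℝ}

/-- `x` is an equilibrium of the rod occupying `[p, q]`, with compressive force `α`, foundation
stiffness `β` and foundation nonlinearity `γ`; the end `p` is guided and the end `q` is hinged. -/
structure IsRodEquilibrium (p q α β γ : ℝ) (x : ℝ → ℝ) : Prop where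
  contDiff : ContDiff ℝ 4 x
  iteratedDeriv_one_left : iteratedDeriv 1 x p = 0
  iteratedDeriv_three_left : iteratedDeriv 3 x p = 0
  right : x q = 0
  iteratedDeriv_two_right : iteratedDeriv 2 x q = 0
  equation : ∀ s ∈ Icc p q,
    iteratedDeriv 4 x s + α * iteratedDeriv 2 x s + β * x s - γ * x s ^ 3 -
      3 * iteratedDeriv 2 x s ^ 3 -
      12 * iteratedDeriv 1 x s * iteratedDeriv 2 x s * iteratedDeriv 3 x s -
      3 * iteratedDeriv 1 x s ^ 2 * (iteratedDeriv 4 x s - α / 2 * iteratedDeriv 2 x s) = 0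

/-- The cubic right-hand side of the rod equation as a function of `u = x⁗`. -/
noncomputable def rodNonlinearity (h : p ≤ q) (α γ : ℝ) (u : C(Icc p q, ℝ)) : C(Icc p q, ℝ) :=
  γ • mixedPrimitive h 4 u ^ 3 + (3 : ℝ) • mixedPrimitive h 2 u ^ 3 +
    (12 : ℝ) • (mixedPrimitive h 3 u * mixedPrimitive h 2 u * mixedPrimitive h 1 u) +
    (3 : ℝ) • (mixedPrimitive h 3 u ^ 2 * (u - (α / 2) • mixedPrimitive h 2 u))

theorem contDiff_rodNonlinearity (h : p ≤ q) (α γ : ℝ) {n : WithTop ℕ∞} :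
    ContDiff ℝ n (rodNonlinearity h α γ) := by
  unfold rodNonlinearity
  fun_prop

theorem rodNonlinearity_smul (h : p ≤ q) (α γ a : ℝ) (u : C(Icc p q, ℝ)) :
    rodNonlinearity h α γ (a • u) = a ^ (2 + 1) • rodNonlinearity h α γ u := by
  ext s
  simp only [rodNonlinearity, map_smul, ContinuousMap.add_apply, ContinuousMap.sub_apply,
    ContinuousMap.mul_apply, ContinuousMap.pow_apply, ContinuousMap.smul_apply, smul_eq_mul]
  ring

/-- The function on the line whose fourth derivative is `u` on `[p, q]` and which satisfies the
boundary conditions of the rod. -/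
noncomputable def rodProfile (h : p ≤ q) (u : C(Icc p q, ℝ)) : ℝ → ℝ :=
  iteratedIntegral (fun i ↦ mixedBasepoint h i) (u.IccExtend h) 4

theorem iteratedDeriv_rodProfile (h : p ≤ q) (u : C(Icc p q, ℝ)) {n k : ℕ} (hnk : n + k = 4)
    (s : Icc p q) : iteratedDeriv k (rodProfile h u) s = mixedPrimitive h n u s := by
  rw [rodProfile, ← hnk]
  exact iteratedDeriv_iteratedIntegral_apply h (mixedBasepoint h) n k u s

theorem rodProfile_apply (h : p ≤ q) (u : C(Icc p q, ℝ)) (s : Icc p q) :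
    rodProfile h u s = mixedPrimitive h 4 u s :=
  (iteratedPrimitive_apply h (mixedBasepoint h) 4 u s).symm

theorem isRodEquilibrium_rodProfile (h : p ≤ q) {u : C(Icc p q, ℝ)}
    (hu : u + α • mixedPrimitive h 2 u + β • mixedPrimitive h 4 u = rodNonlinearity h α γ u) :
    IsRodEquilibrium p q α β γ (rodProfile h u) where
  contDiff := contDiff_iteratedIntegral (u.IccExtend h).continuous 4
  iteratedDeriv_one_left := (iteratedDeriv_rodProfile h u rfl ⟨p, left_mem_Icc.2 h⟩).trans
    (primitive_self h (mixedBasepoint h 2) _)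
  iteratedDeriv_three_left := (iteratedDeriv_rodProfile h u rfl ⟨p, left_mem_Icc.2 h⟩).trans
    (primitive_self h (mixedBasepoint h 0) _)
  right := iteratedIntegral_succ_self 3
  iteratedDeriv_two_right := (iteratedDeriv_rodProfile h u rfl ⟨q, right_mem_Icc.2 h⟩).trans
    (mixedPrimitive_two_right u)
  equation s hs := by
    have hus := DFunLike.congr_fun hu ⟨s, hs⟩
    have hderiv (n k : ℕ) (hnk : n + k = 4) := iteratedDeriv_rodProfile h u hnk ⟨s, hs⟩
    have hzero : mixedPrimitive h 0 u ⟨s, hs⟩ = u ⟨s, hs⟩ := rfl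
    simp only [rodNonlinearity, ContinuousMap.add_apply, ContinuousMap.sub_apply,
      ContinuousMap.mul_apply, ContinuousMap.pow_apply, ContinuousMap.smul_apply,
      smul_eq_mul] at hus
    rw [hderiv 0 4 rfl, hderiv 1 3 rfl, hderiv 2 2 rfl, hderiv 3 1 rfl,
      rodProfile_apply h u ⟨s, hs⟩, hzero]
    linear_combination hus

theorem exists_rodProfile_ne_zero (h : p < q) {u : C(Icc p q, ℝ)} (hu : u ≠ 0) :
    ∃ s ∈ Icc p q, rodProfile h.le u s ≠ 0 := by
  obtain ⟨s, hs⟩ := DFunLike.ne_iff.1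
    ((map_ne_zero_iff _ (injective_iteratedPrimitive h (mixedBasepoint h.le) 4)).2 hu)
  exact ⟨s, s.2, (rodProfile_apply h.le u s).trans_ne hs⟩

theorem eventually_abs_iteratedDeriv_rodProfile_lt (h : p ≤ q) (hε : 0 < ε) :
    ∀ᶠ u in 𝓝 0, ∀ k ≤ 4, ∀ s ∈ Icc p q, |iteratedDeriv k (rodProfile h u) s| < ε := by
  have hsmall (n : ℕ) : ∀ᶠ u in 𝓝 0, ‖mixedPrimitive h n u‖ < ε :=
    ((mixedPrimitive h n).continuous.norm.tendsto' 0 0 (by simp)).eventually_lt_const hε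
  filter_upwards [(finite_Iic 4).eventually_all.2 fun n _ ↦ hsmall n] with u hu k hk s hs
  rw [iteratedDeriv_rodProfile h u (Nat.sub_add_cancel hk) ⟨s, hs⟩]
  exact ((mixedPrimitive h (4 - k) u).norm_coe_le_norm ⟨s, hs⟩).trans_lt (hu _ (Nat.sub_le 4 k))

theorem frequently_rod_equation (h : p ≤ q) (γ : ℝ) (hω : cos (ω * (q - p)) = 0)
    (hμ : ∀ v, v + μ • mixedPrimitive h 2 v = 0 → v = 0) :
    ∃ᶠ z : C(Icc p q, ℝ) × ℝ in 𝓝 0, z.1 ≠ 0 ∧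
      z.1 + (μ + ω ^ 2) • mixedPrimitive h 2 z.1 +
        (μ * ω ^ 2 + z.2) • mixedPrimitive h 4 z.1 = rodNonlinearity h (μ + ω ^ 2) γ z.1 := by
  refine (crandallRabinowitz_of_homogeneous two_ne_zero
    (contDiff_rodNonlinearity h (μ + ω ^ 2) γ) (rodNonlinearity_smul h (μ + ω ^ 2) γ)
    (cosineMode_ne_zero h) (ker_linearizedRod h hω hμ)
    (mixedPrimitive_four_cosineMode_notMem_range h hω)
    (range_linearizedRod_sup_span_eq_top h hω hμ)).mono fun z hz ↦ ⟨hz.1, ?_⟩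
  rw [← hz.2]
  simp only [linearizedRod, add_apply, smul_apply, one_apply_eq_self]
  module

theorem stmt_14_general {α₀ β₀ : ℝ} (h : p ≤ q) (hω : cos (ω * (q - p)) = 0)
    (hβ₀ : β₀ = ω ^ 2 * α₀ - (ω ^ 2) ^ 2) (γ : ℝ) (hε : 0 < ε) :
    ∃ α β : ℝ, ∃ x : ℝ → ℝ, |α - α₀| < ε ∧ |β - β₀| < ε ∧ IsRodEquilibrium p q α β γ x ∧
      (∃ s ∈ Icc p q, x s ≠ 0) ∧ ∀ k ≤ 4, ∀ s ∈ Icc p q, |iteratedDeriv k x s| < ε := by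
  have hpq : p < q := lt_of_cos_mul_sub_eq_zero h hω
  have hα : ∀ᶠ μ in 𝓝 (α₀ - ω ^ 2), |μ + ω ^ 2 - α₀| < ε :=
    (Continuous.tendsto' (by fun_prop) _ 0 (by simp)).eventually_lt_const hε
  have hμβ : ∀ᶠ μ in 𝓝 (α₀ - ω ^ 2), |μ * ω ^ 2 - β₀| < ε := by
    refine (Continuous.tendsto' (by fun_prop) _ 0 ?_).eventually_lt_const hε
    rw [abs_eq_zero, hβ₀]
    ring
  obtain ⟨μ, hμ, hμα, hμβ⟩ :=
    ((frequently_injective_one_add_smul_mixedPrimitive hpq _).and_eventually (hα.and hμβ)).exists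
  have hβ : ∀ᶠ z : C(Icc p q, ℝ) × ℝ in 𝓝 0, |μ * ω ^ 2 + z.2 - β₀| < ε :=
    (Continuous.tendsto' (by fun_prop) _ _ (by simp)).eventually_lt_const hμβ
  have hsmall := (continuous_fst.tendsto (0 : C(Icc p q, ℝ) × ℝ)).eventually
    (eventually_abs_iteratedDeriv_rodProfile_lt h hε)
  obtain ⟨z, ⟨hz0, hz⟩, hzβ, hzsmall⟩ :=
    ((frequently_rod_equation h γ hω hμ).and_eventually (hβ.and hsmall)).exists
  exact ⟨_, _, rodProfile h z.1, hμα, hzβ, isRodEquilibrium_rodProfile h hz,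
    exists_rodProfile_ne_zero hpq hz0, hzsmall⟩

end Rod

/-- Bifurcation occurs at every parameter point where the linearization has a
nontrivial kernel: arbitrarily close to `(0,α₀,β₀,γ₀)` there are nontrivial solutions. -/
theorem stmt_14 (r : ℝ) (hr : 0 < r)
    (c : ℕ → ℝ)
    (hc : ∀ m : ℕ, c m = -(π / r) ^ 2 * ((2 * (m : ℝ) - 1) / 4) ^ 2)
    (α₀ β₀ γ₀ : ℝ) (hα₀ : 0 < α₀) (hβ₀ : 0 < β₀) (hγ₀ : 0 < γ₀)
    (m : ℕ) (hm : 1 ≤ m) (hray : β₀ = -(c m) * α₀ - (c m) ^ 2) :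
    ∀ ε > 0, ∃ α β γ : ℝ, ∃ x : ℝ → ℝ,
      0 < α ∧ 0 < β ∧ 0 < γ ∧
      |α - α₀| < ε ∧ |β - β₀| < ε ∧ |γ - γ₀| < ε ∧
      ContDiff ℝ 4 x ∧
      (∃ s ∈ Icc (-r) r, x s ≠ 0) ∧
      iteratedDeriv 1 x (-r) = 0 ∧ iteratedDeriv 3 x (-r) = 0 ∧
      x r = 0 ∧ iteratedDeriv 2 x r = 0 ∧
      (∀ s ∈ Icc (-r) r,
        iteratedDeriv 4 x s + α * iteratedDeriv 2 x s + β * x s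
          - γ * (x s) ^ 3 - 3 * (iteratedDeriv 2 x s) ^ 3
          - 12 * iteratedDeriv 1 x s * iteratedDeriv 2 x s * iteratedDeriv 3 x s
          - 3 * (iteratedDeriv 1 x s) ^ 2 *
              (iteratedDeriv 4 x s - (α / 2) * iteratedDeriv 2 x s) = 0) ∧
      (∀ k : ℕ, k ≤ 4 → ∀ s ∈ Icc (-r) r, |iteratedDeriv k x s| < ε) := by
  intro ε hε
  let ω := (2 * (m : ℝ) - 1) * π / (4 * r)
  have hcω : c m = -ω ^ 2 := by
    rw [hc]
    ring
  have hβω : β₀ = ω ^ 2 * α₀ - (ω ^ 2) ^ 2 := by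
    rw [hray, hcω]
    ring
  have hω : cos (ω * (r - -r)) = 0 := by
    refine cos_eq_zero_iff.2 ⟨m - 1, ?_⟩
    push_cast [ω]
    field_simp
    ring
  obtain ⟨α, β, x, hα, hβ, hx, hx0, hsmall⟩ := stmt_14_general (by linarith) hω hβω γ₀
    (lt_min hε (lt_min hα₀ hβ₀))
  simp only [lt_min_iff] at hα hβ hsmall
  exact ⟨α, β, γ₀, x, by linarith [(abs_lt.1 hα.2.1).1], by linarith [(abs_lt.1 hβ.2.2).1], hγ₀,
    hα.1, hβ.1, by simpa using hε, hx.contDiff, hx0, hx.iteratedDeriv_one_left,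
    hx.iteratedDeriv_three_left, hx.right, hx.iteratedDeriv_two_right, hx.equation,
    fun k hk s hs ↦ (hsmall k hk s hs).1⟩
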